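/- Syntactic Tarski's Theorem for a consistent theory T implies the Weak Diagonal Lemma for T: if for every formula Φ(x) the theory T does not contain all biconditionals Φ(⌜β⌝) ↔ β, then for every formula Ψ(x) there exists a sentence θ such that T + (Ψ(⌜θ⌝) ↔ θ) is consistent. -/

import Mathlib

open FirstOrder Language

/-- Function symbols of the language of arithmetic: 0, 1, +, ×. -/
inductive ArithFunc : ℕ → Type
  | zero : ArithFunc 0
  | one : ArithFunc 0
  | add : ArithFunc 2
  | mul : ArithFunc 2

/-- Relation symbols of the language of arithmetic: <. -/
inductive ArithRel : ℕ → Type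
  | lt : ArithRel 2

/-- The first-order language of arithmetic. -/
def LA : FirstOrder.Language := ⟨ArithFunc, ArithRel⟩

/-- The standard model ℕ of arithmetic. -/
instance : LA.Structure ℕ where
  funMap := fun {_} f => match f with
    | .zero => fun _ => 0
    | .one => fun _ => 1
    | .add => fun v => v 0 + v 1
    | .mul => fun v => v 0 * v 1
  RelMap := fun {_} r => match r with
    | .lt => fun v => v 0 < v 1

instance : Encodable (Σ n, LA.Functions n) :=
  Encodable.ofEquiv (Fin 4)
    { toFun := fun f => match f with
        | ⟨0, .zero⟩ => 0
        | ⟨0, .one⟩ => 1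
        | ⟨2, .add⟩ => 2
        | ⟨2, .mul⟩ => 3
      invFun := fun i => match i with
        | 0 => ⟨0, .zero⟩
        | 1 => ⟨0, .one⟩
        | 2 => ⟨2, .add⟩
        | 3 => ⟨2, .mul⟩
      left_inv := by rintro ⟨n, f⟩ <;> cases f <;> rfl
      right_inv := by intro i; fin_cases i <;> rfl }

instance : Encodable (Σ n, LA.Relations n) :=
  Encodable.ofEquiv (Fin 1)
    { toFun := fun f => match f with
        | ⟨2, .lt⟩ => 0
      invFun := fun _ => ⟨2, .lt⟩
      left_inv := by rintro ⟨n, r⟩; cases r; rfl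
      right_inv := by intro i; fin_cases i; rfl }

/-- A canonical (computable, injective) Gödel numbering `⌜·⌝` of sentences,
via Mathlib's list encoding of first-order formulas. -/
def godelCode (φ : LA.Sentence) : ℕ :=
  Encodable.encode φ.listEncode

/-- The numeral `n̄`: `0̄ = 0`, `1̄ = 1`, `(m+1)̄ = 1 + m̄`. -/
def numeral (α : Type) : ℕ → LA.Term α
  | 0 => Constants.term ArithFunc.zero
  | 1 => Constants.term ArithFunc.one
  | n + 2 => Functions.apply₂ (L := LA) ArithFunc.add
      (Constants.term ArithFunc.one) (numeral α (n + 1))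

/-- `ℕ ⊨ Ψ(⌜θ⌝)`: the formula `Ψ(x)` holds in the standard model ℕ at the
Gödel code of the sentence `θ`. -/
def RealizeAtCode (Ψ : LA.Formula (Fin 1)) (θ : LA.Sentence) : Prop :=
  Ψ.Realize (M := ℕ) (fun _ => (godelCode θ : ℕ))

/-- A theory is consistent iff it does not prove (have as a consequence) falsum. -/
def Consistent (T : LA.Theory) : Prop :=
  ¬ (T ⊨ᵇ (⊥ : LA.Sentence))

/-- The sentence `Ψ(⌜θ⌝) ↔ θ`. -/
def diagBicond (Ψ : LA.Formula (Fin 1)) (θ : LA.Sentence) : LA.Sentence :=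
  (Ψ.subst (fun _ => numeral Empty (godelCode θ))) ⇔ θ

/-- The term `t + 1` (successor). -/
def succT {α : Type} {n : ℕ} (t : LA.Term (α ⊕ Fin n)) : LA.Term (α ⊕ Fin n) :=
  Functions.apply₂ (L := LA) ArithFunc.add t (Constants.term ArithFunc.one)

/-- The term `0`. -/
def zeroT {α : Type} {n : ℕ} : LA.Term (α ⊕ Fin n) := Constants.term (L := LA) ArithFunc.zero

/-- The term `t + s`. -/
def addT {α : Type} {n : ℕ} (t s : LA.Term (α ⊕ Fin n)) : LA.Term (α ⊕ Fin n) :=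
  Functions.apply₂ (L := LA) ArithFunc.add t s

/-- The term `t * s`. -/
def mulT {α : Type} {n : ℕ} (t s : LA.Term (α ⊕ Fin n)) : LA.Term (α ⊕ Fin n) :=
  Functions.apply₂ (L := LA) ArithFunc.mul t s

/-- The atomic formula `t < s`. -/
def ltF {α : Type} {n : ℕ} (t s : LA.Term (α ⊕ Fin n)) : LA.BoundedFormula α n :=
  Relations.boundedFormula₂ (L := LA) ArithRel.lt t s

/-- Robinson's arithmetic Q. -/
def Q : LA.Theory :=
  { ∀' ∼(succT &0 =' zeroT),
    ∀' ∀' (succT &0 =' succT &1 ⟹ &0 =' &1),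
    ∀' (∼(&0 =' zeroT) ⟹ ∃' (&0 =' succT &1)),
    ∀' (addT &0 zeroT =' &0),
    ∀' ∀' (addT &0 (succT &1) =' succT (addT &0 &1)),
    ∀' (mulT &0 zeroT =' zeroT),
    ∀' ∀' (mulT &0 (succT &1) =' addT (mulT &0 &1) &0),
    ∀' ∀' (ltF &0 &1 ⇔ ∃' (addT &0 (succT &2) =' &1)) }

/-- A theory is recursively enumerable iff its set of Gödel codes is the domain
of a partial recursive function. -/
def RETheory (T : LA.Theory) : Prop :=
  ∃ f : ℕ →. Unit, Partrec f ∧ ∀ φ : LA.Sentence, φ ∈ T ↔ (f (godelCode φ)).Dom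

/-- Syntactic Tarski's Theorem for a consistent `T` implies the Weak Diagonal
Lemma for `T`. -/
theorem stmt9 (T : LA.Theory) (hcons : Consistent T)
    (tarski : ∀ Φ : LA.Formula (Fin 1), ¬ ∀ β : LA.Sentence, T ⊨ᵇ diagBicond Φ β) :
    ∀ Ψ : LA.Formula (Fin 1), ∃ θ : LA.Sentence, Consistent (T ∪ {diagBicond Ψ θ}) := by
  intro Ψ
  by_contra hne
  push Not at hne
  apply tarski (∼Ψ)
  intro β M v xs
  by_contra hM
  have h := hne β
  unfold Consistent at h
  rw [not_not] at h
  have hb : M ⊨ diagBicond Ψ β := by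
    have hM' : ¬ (M ⊨ diagBicond (∼Ψ) β) := by
      intro hs
      apply hM
      have e1 : v = default := Subsingleton.elim _ _
      have e2 : xs = default := Subsingleton.elim _ _
      rw [e1, e2]
      exact hs
    have key : ∀ Φ : LA.Formula (Fin 1), (M ⊨ diagBicond Φ β) ↔
        (Φ.Realize (fun _ => (numeral Empty (godelCode β)).realize (default : Empty → M)) ↔
          M ⊨ β) := by
      intro Φ
      unfold diagBicond Sentence.Realize Formula.Realize
      rw [BoundedFormula.realize_iff, BoundedFormula.realize_subst]
    rw [key] at hM' ⊢
    rw [Formula.realize_not] at hM'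
    tauto
  have hT : M ⊨ T ∪ {diagBicond Ψ β} := by
    rw [Theory.model_iff]
    rintro φ (hφ | hφ)
    · exact Theory.realize_sentence_of_mem T hφ
    · rw [Set.mem_singleton_iff] at hφ
      rw [hφ]; exact hb
  exact h (Theory.ModelType.of (T ∪ {diagBicond Ψ β}) M) default default
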